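/- For every α ∈ (0,1), every nonuniform time mesh, and all indices k ≥ 2 and 1 ≤ j ≤ k−1, the L2-1_σ coefficient c_j^k admits the representation c_j^k = (α τ_j³/(τ_{j+1}(τ_j + τ_{j+1}))) ∫_0^1 s(1 − s)(t_k^* − t_j + s τ_j)^{−α−1} ds. -/

import Mathlib

open MeasureTheory Real Finset

noncomputable section

/-- Time step `τ_j = t_j - t_{j-1}`. -/
def tau (t : ℕ → ℝ) (j : ℕ) : ℝ := t j - t (j - 1)

/-- Step ratio `ρ_j = τ_j / τ_{j-1}`. -/
def rho (t : ℕ → ℝ) (j : ℕ) : ℝ := tau t j / tau t (j - 1)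

/-- Offset node `t_k^* = t_{k-1} + σ τ_k` with `σ = 1 - α/2`. -/
def tstar (α : ℝ) (t : ℕ → ℝ) (k : ℕ) : ℝ := t (k - 1) + (1 - α / 2) * tau t k

/-- L2-1_σ coefficient `a_j^k`. -/
def acoef (α : ℝ) (t : ℕ → ℝ) (j k : ℕ) : ℝ :=
  ∫ θ in (0:ℝ)..1,
    (-2 * tau t j * (1 - θ) - tau t (j + 1)) /
      ((tau t j + tau t (j + 1)) * (tstar α t k - (t (j - 1) + θ * tau t j)) ^ α)

/-- L2-1_σ coefficient `c_j^k`. -/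
def ccoef (α : ℝ) (t : ℕ → ℝ) (j k : ℕ) : ℝ :=
  ∫ θ in (0:ℝ)..1,
    (tau t j ^ 2 * (2 * θ - 1)) /
      (tau t (j + 1) * (tau t j + tau t (j + 1)) *
        (tstar α t k - (t (j - 1) + θ * tau t j)) ^ α)

/-- `d_j^k = c_{j-1}^k - a_j^k`. -/
def dcoef (α : ℝ) (t : ℕ → ℝ) (j k : ℕ) : ℝ := ccoef α t (j - 1) k - acoef α t j k

/-- The lower-triangular L2-1_σ matrix `M` (entries vanish above the diagonal and
for column index `0`). -/
def Mentry (α : ℝ) (t : ℕ → ℝ) (k j : ℕ) : ℝ :=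
  if j = 0 ∨ k < j then 0
  else if j = k then ccoef α t (k - 1) k + (1 - α / 2) ^ (1 - α) / ((1 - α) * tau t k ^ α)
  else if j = 1 then -acoef α t 1 k
  else dcoef α t j k

end

/-! The weight `1 - 2 s` is the derivative of `s (1 - s)`, which vanishes at both ends of `[0, 1]`.
After the reflection `θ = 1 - s` the kernel of `c_j^k` becomes `(t_k^* - t_j + s τ_j) ^ (-α)`, so
integrating by parts produces no boundary term and differentiates the power; the factor `α τ_j`
comes from that derivative. -/

theorem integral_add_sub_two_mul_smul_eq_neg_integral_smul_deriv {E : Type*}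
    [NormedAddCommGroup E] [NormedSpace ℝ E] [CompleteSpace E] {f f' : ℝ → E} {a b : ℝ}
    (hf : ∀ x ∈ Set.uIcc a b, HasDerivAt f (f' x) x) (hf' : IntervalIntegrable f' volume a b) :
    ∫ x in a..b, (a + b - 2 * x) • f x = -∫ x in a..b, ((x - a) * (b - x)) • f' x := by
  have hweight (x : ℝ) : HasDerivAt (fun x ↦ (x - a) * (b - x)) (a + b - 2 * x) x :=
    (((hasDerivAt_id' x).sub_const a).mul ((hasDerivAt_id' x).const_sub b)).congr_deriv (by ring)
  have hparts := intervalIntegral.integral_smul_deriv_eq_deriv_smul (fun x _ ↦ hweight x) hf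
    (Continuous.intervalIntegrable (by fun_prop) a b) hf'
  simp only [sub_self, mul_zero, zero_mul, zero_smul, zero_sub] at hparts
  rw [hparts, neg_neg]

theorem add_mul_pos_of_mem_Icc {A u s : ℝ} (hA : 0 < A) (hAu : 0 < A + u)
    (hs : s ∈ Set.Icc (0 : ℝ) 1) : 0 < A + s * u :=
  (convex_Ioi (0 : ℝ)).add_smul_mem hA hAu hs

theorem integral_one_sub_two_mul_mul_rpow {A u : ℝ} (hA : 0 < A) (hAu : 0 < A + u) (p : ℝ) :
    ∫ s in (0 : ℝ)..1, (1 - 2 * s) * (A + s * u) ^ p =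
      -p * u * ∫ s in (0 : ℝ)..1, s * (1 - s) * (A + s * u) ^ (p - 1) := by
  have hpos : ∀ s ∈ Set.uIcc (0 : ℝ) 1, 0 < A + s * u := fun s hs ↦
    add_mul_pos_of_mem_Icc hA hAu (Set.uIcc_of_le (zero_le_one' ℝ) ▸ hs)
  have hderiv : ∀ s ∈ Set.uIcc (0 : ℝ) 1,
      HasDerivAt (fun s ↦ (A + s * u) ^ p) (u * p * (A + s * u) ^ (p - 1)) s := fun s hs ↦
    ((hasDerivAt_mul_const u).const_add A).rpow_const (.inl (hpos s hs).ne')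
  have hcont : ContinuousOn (fun s ↦ u * p * (A + s * u) ^ (p - 1)) (Set.uIcc 0 1) :=
    .mul (by fun_prop) (.rpow_const (by fun_prop) fun s hs ↦ .inl (hpos s hs).ne')
  calc ∫ s in (0 : ℝ)..1, (1 - 2 * s) * (A + s * u) ^ p
      = -∫ s in (0 : ℝ)..1, s * (1 - s) * (u * p * (A + s * u) ^ (p - 1)) := by
        simpa only [zero_add, sub_zero, smul_eq_mul] using
          integral_add_sub_two_mul_smul_eq_neg_integral_smul_deriv hderiv hcont.intervalIntegrable
    _ = -p * u * ∫ s in (0 : ℝ)..1, s * (1 - s) * (A + s * u) ^ (p - 1) := by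
        simp only [mul_left_comm _ (u * p), intervalIntegral.integral_const_mul]
        ring

theorem tau_pos {t : ℕ → ℝ} (ht : StrictMono t) {j : ℕ} (hj : 1 ≤ j) : 0 < tau t j :=
  sub_pos.2 (ht (Nat.sub_one_lt_of_lt hj))

theorem lt_tstar {α : ℝ} (hα : α < 2) {t : ℕ → ℝ} (ht : StrictMono t) {j k : ℕ} (hjk : j < k) :
    t j < tstar α t k := by
  have hoffset : 0 < (1 - α / 2) * tau t k :=
    mul_pos (by linarith) (tau_pos ht (Nat.one_le_of_lt hjk))
  exact (ht.monotone (Nat.le_sub_one_of_lt hjk)).trans_lt (lt_add_of_pos_right _ hoffset)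

theorem ccoef_eq_mul_integral_one_sub_two_mul {α : ℝ} {t : ℕ → ℝ} {j k : ℕ}
    (hpos : ∀ s ∈ Set.Icc (0 : ℝ) 1, 0 ≤ tstar α t k - t j + s * tau t j) :
    ccoef α t j k = tau t j ^ 2 / (tau t (j + 1) * (tau t j + tau t (j + 1))) *
      ∫ s in (0 : ℝ)..1, (1 - 2 * s) * (tstar α t k - t j + s * tau t j) ^ (-α) := by
  have hreflect (s : ℝ) : tstar α t k - (t (j - 1) + (1 - s) * tau t j) =
      tstar α t k - t j + s * tau t j := by
    unfold tau
    ring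
  have hsubst := intervalIntegral.integral_comp_sub_left (a := 0) (b := 1)
    (fun θ ↦ tau t j ^ 2 * (2 * θ - 1) / (tau t (j + 1) * (tau t j + tau t (j + 1)) *
      (tstar α t k - (t (j - 1) + θ * tau t j)) ^ α)) 1
  rw [sub_self, sub_zero] at hsubst
  rw [ccoef, ← hsubst, ← intervalIntegral.integral_const_mul]
  refine intervalIntegral.integral_congr fun s hs ↦ ?_
  rw [Set.uIcc_of_le zero_le_one] at hs
  simp only [hreflect, rpow_neg (hpos s hs), div_eq_mul_inv, mul_inv]
  ring

theorem ccoef_repr_general {α : ℝ} (hα : α < 2) {t : ℕ → ℝ} (ht : StrictMono t) {j k : ℕ}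
    (hj : 1 ≤ j) (hjk : j < k) :
    ccoef α t j k = α * tau t j ^ 3 / (tau t (j + 1) * (tau t j + tau t (j + 1))) *
      ∫ s in (0 : ℝ)..1, s * (1 - s) * (tstar α t k - t j + s * tau t j) ^ (-α - 1) := by
  have hgap : 0 < tstar α t k - t j := sub_pos.2 (lt_tstar hα ht hjk)
  have hgap' : 0 < tstar α t k - t j + tau t j := add_pos hgap (tau_pos ht hj)
  rw [ccoef_eq_mul_integral_one_sub_two_mul fun s hs ↦ (add_mul_pos_of_mem_Icc hgap hgap' hs).le,
    integral_one_sub_two_mul_mul_rpow hgap hgap']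
  ring

/-- Reformulation of `c_j^k` for `k ≥ 2`, `1 ≤ j ≤ k-1`. -/
theorem ccoef_repr (α : ℝ) (hα : α ∈ Set.Ioo (0:ℝ) 1)
    (t : ℕ → ℝ) (ht0 : t 0 = 0) (hmono : StrictMono t)
    (k j : ℕ) (hk : 2 ≤ k) (hj1 : 1 ≤ j) (hj2 : j ≤ k - 1) :
    ccoef α t j k
      = α * tau t j ^ 3 / (tau t (j + 1) * (tau t j + tau t (j + 1))) *
          ∫ s in (0:ℝ)..1,
            s * (1 - s) * (tstar α t k - t j + s * tau t j) ^ (-α - 1) :=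
  ccoef_repr_general (hα.2.trans one_lt_two) hmono hj1 (by lia)
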